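/- Suppose there exists u ∈ V such that B u = 0 and C u = f. Then, as ε → 0, the solutions (u_ε, λ_ε) of the regularized mixed formulation converge strongly to (u, 0) in V × M. -/

import Mathlib

/-!
Testing the second equation against all `μ` gives `λ_ε = B u_ε`, so with `T = B† B + C† C` the first
one reads `(ε + T) u_ε = T u`, and the error `e = u - u_ε` solves `ε e + T e = ε u`. Injectivity of
`v ↦ (B v, C v)` makes the self-adjoint operator `T` injective, hence its range is dense
(`exists_norm_sub_normal_lt`): `u` is within any `δ > 0` of some `T z`. Pairing the error equation
with `e`, replacing `u` by `T z` and absorbing the cross terms with Young's inequality yields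
`‖e‖² ≤ δ² + ε (‖B z‖² + ‖C z‖²) / 2` (`error_bound`). Hence `u_ε → u`, and
`λ_ε = B u_ε → B u = 0` by continuity of `B`.
-/

set_option synthInstance.maxHeartbeats 1000000
set_option maxHeartbeats 1000000

open scoped RealInnerProductSpace

open ContinuousLinearMap in
/-- The normal operator `B† B + C† C` has dense range, since its kernel is trivial. -/
lemma exists_norm_sub_normal_lt
    {V M O : Type*} [NormedAddCommGroup V] [InnerProductSpace ℝ V] [CompleteSpace V]
    [NormedAddCommGroup M] [InnerProductSpace ℝ M] [CompleteSpace M]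
    [NormedAddCommGroup O] [InnerProductSpace ℝ O] [CompleteSpace O]
    (B : V →L[ℝ] M) (C : V →L[ℝ] O)
    (hA : Function.Injective (fun v : V => (B v, C v))) (u : V) {δ : ℝ} (hδ : 0 < δ) :
    ∃ z : V, ‖u - (adjoint B (B z) + adjoint C (C z))‖ < δ := by
  let T : V →L[ℝ] V := adjoint B ∘L B + adjoint C ∘L C
  have hperp : (LinearMap.range (T : V →ₗ[ℝ] V))ᗮ = ⊥ := by
    rw [Submodule.eq_bot_iff]
    intro x hx
    -- `x ⊥ T x` forces `‖B x‖² + ‖C x‖² = 0`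
    have h : ⟪T x, x⟫ = 0 := (Submodule.mem_orthogonal _ x).1 hx (T x) ⟨x, rfl⟩
    simp only [T, add_apply, comp_apply, inner_add_left, adjoint_inner_left,
      real_inner_self_eq_norm_sq] at h
    have hB : B x = 0 := by
      rw [← norm_eq_zero]; nlinarith [sq_nonneg ‖B x‖, sq_nonneg ‖C x‖]
    have hC : C x = 0 := by
      rw [← norm_eq_zero]; nlinarith [sq_nonneg ‖B x‖, sq_nonneg ‖C x‖]
    exact hA (by simp [hB, hC])
  have hu : u ∈ closure (LinearMap.range (T : V →ₗ[ℝ] V) : Set V) := by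
    have htop := (Submodule.topologicalClosure_eq_top_iff).2 hperp
    rw [← Submodule.topologicalClosure_coe, htop]
    trivial
  obtain ⟨_, ⟨z, rfl⟩, hz⟩ := Metric.mem_closure_iff.1 hu δ hδ
  exact ⟨z, by simpa [dist_eq_norm, T] using hz⟩

open ContinuousLinearMap in
/-- Error estimate for the weak form of `ε e + (B† B + C† C) e = ε u` when `u` is `δ`-close to
`(B† B + C† C) z`. -/
lemma error_bound
    {V M O : Type*} [NormedAddCommGroup V] [InnerProductSpace ℝ V] [CompleteSpace V]
    [NormedAddCommGroup M] [InnerProductSpace ℝ M] [CompleteSpace M]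
    [NormedAddCommGroup O] [InnerProductSpace ℝ O] [CompleteSpace O]
    (B : V →L[ℝ] M) (C : V →L[ℝ] O) {u e z : V} {ε δ : ℝ} (hε : 0 < ε)
    (he : ∀ v : V, ε * ⟪e, v⟫ + ⟪C e, C v⟫ + ⟪B e, B v⟫ = ε * ⟪u, v⟫)
    (hz : ‖u - (adjoint B (B z) + adjoint C (C z))‖ ≤ δ) :
    ‖e‖ ^ 2 ≤ δ ^ 2 + ε * (‖B z‖ ^ 2 + ‖C z‖ ^ 2) / 2 := by
  have h := he e
  simp only [real_inner_self_eq_norm_sq] at h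
  have hsplit : ⟪u, e⟫ = ⟪u - (adjoint B (B z) + adjoint C (C z)), e⟫
      + ⟪B z, B e⟫ + ⟪C z, C e⟫ := by
    simp only [inner_sub_left, inner_add_left, adjoint_inner_left]
    ring
  have h1 : ⟪u - (adjoint B (B z) + adjoint C (C z)), e⟫ ≤ δ * ‖e‖ :=
    (real_inner_le_norm _ _).trans (by gcongr)
  have h2 := real_inner_le_norm (B z) (B e)
  have h3 := real_inner_le_norm (C z) (C e)
  have h4 : ε * ⟪u, e⟫ ≤ ε * (δ * ‖e‖ + ‖B z‖ * ‖B e‖ + ‖C z‖ * ‖C e‖) := by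
    rw [hsplit]; gcongr
  -- Young's inequality cancels `‖B e‖² + ‖C e‖²` and half of `ε ‖e‖²`
  have h5 : ε * ‖e‖ ^ 2 ≤ ε * (δ ^ 2 + ε * (‖B z‖ ^ 2 + ‖C z‖ ^ 2) / 2) := by
    nlinarith [sq_nonneg (‖B e‖ - ε * ‖B z‖ / 2), sq_nonneg (‖C e‖ - ε * ‖C z‖ / 2),
      mul_nonneg hε.le (sq_nonneg (δ - ‖e‖))]
  exact le_of_mul_le_mul_left h5 hε

/-- If there exists `u ∈ V` with `B u = 0` and `C u = f`, then the solutions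
`(u_ε, λ_ε)` of the regularized mixed formulation converge strongly to `(u, 0)` in
`V × M` as `ε → 0`. -/
theorem mixed_formulation_convergence
    {V M O : Type*} [NormedAddCommGroup V] [InnerProductSpace ℝ V] [CompleteSpace V]
    [NormedAddCommGroup M] [InnerProductSpace ℝ M] [CompleteSpace M]
    [NormedAddCommGroup O] [InnerProductSpace ℝ O] [CompleteSpace O]
    (B : V →L[ℝ] M) (C : V →L[ℝ] O)
    (hA : Function.Injective (fun v : V => (B v, C v)))
    (f : O) (u : V) (hBu : B u = 0) (hCu : C u = f)
    (sol : ℝ → V × M)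
    (hsol : ∀ ε : ℝ, 0 < ε →
      (∀ v : V, ε * ⟪(sol ε).1, v⟫ + ⟪C (sol ε).1, C v⟫ + ⟪B v, (sol ε).2⟫ = ⟪f, C v⟫) ∧
      (∀ μ : M, ⟪B (sol ε).1, μ⟫ - ⟪(sol ε).2, μ⟫ = 0)) :
    Filter.Tendsto sol (nhdsWithin 0 (Set.Ioi (0 : ℝ))) (nhds (u, (0 : M))) := by
  have hlam : ∀ ε : ℝ, 0 < ε → (sol ε).2 = B (sol ε).1 := fun ε hε =>
    (ext_inner_right ℝ fun μ => sub_eq_zero.1 ((hsol ε hε).2 μ)).symm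
  have hfst : Filter.Tendsto (fun ε => (sol ε).1) (nhdsWithin 0 (Set.Ioi (0 : ℝ))) (nhds u) := by
    rw [Metric.tendsto_nhds]
    intro r hr
    obtain ⟨z, hz⟩ := exists_norm_sub_normal_lt B C hA u (half_pos hr)
    have hlim : Filter.Tendsto (fun ε : ℝ => (r / 2) ^ 2 + ε * (‖B z‖ ^ 2 + ‖C z‖ ^ 2) / 2)
        (nhdsWithin 0 (Set.Ioi (0 : ℝ))) (nhds ((r / 2) ^ 2)) := by
      have hc : Continuous (fun ε : ℝ => (r / 2) ^ 2 + ε * (‖B z‖ ^ 2 + ‖C z‖ ^ 2) / 2) := by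
        fun_prop
      simpa using (hc.tendsto 0).mono_left nhdsWithin_le_nhds
    have hlt : (r / 2) ^ 2 < r ^ 2 := by nlinarith
    filter_upwards [hlim.eventually_lt_const hlt, self_mem_nhdsWithin] with ε hsmall hε
    have hε' : 0 < ε := hε
    rw [dist_comm, dist_eq_norm]
    refine lt_of_pow_lt_pow_left₀ 2 hr.le (lt_of_le_of_lt ?_ hsmall)
    refine error_bound B C hε' ?_ hz.le
    intro v
    have h := (hsol ε hε').1 v
    rw [hlam ε hε', ← hCu, real_inner_comm (B (sol ε).1) (B v)] at h
    simp only [map_sub, inner_sub_left, hBu, inner_zero_left]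
    linarith
  refine hfst.prodMk_nhds ?_
  have hB := (B.continuous.tendsto u).comp hfst
  rw [hBu] at hB
  refine hB.congr' ?_
  filter_upwards [self_mem_nhdsWithin] with ε hε
  exact (hlam ε hε).symm
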